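/- Let f and g be smooth real-valued functions on S¹ with zero mean. Then −[ ∂₁g·H∂₁²f + ∂₁(g·H∂₁²f) + ∂₁(∂₁²f·Hg) − 2Λ(g·∂₁²f) + g·Λ∂₁²f ] = ∂₁([H,Hg]H∂₁²f) + Λ(Hg·H∂₁²f) pointwise on S¹. -/

import Mathlib

open Complex Filter MeasureTheory

noncomputable section

instance : Fact (0 < 2 * Real.pi) := ⟨by positivity⟩

/-- Hilbert transform on the circle `S¹ = ℝ/2πℤ`: Fourier multiplier `-i·sgn k`. -/
def Hop (f : AddCircle (2 * Real.pi) → ℂ) : AddCircle (2 * Real.pi) → ℂ :=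
  fun x => ∑' k : ℤ, (-Complex.I) * (k.sign : ℂ) * fourierCoeff f k * fourier k x

/-- `Λⁿ`: Fourier multiplier `|k|ⁿ`. -/
def Lamn (n : ℕ) (f : AddCircle (2 * Real.pi) → ℂ) : AddCircle (2 * Real.pi) → ℂ :=
  fun x => ∑' k : ℤ, ((|k| : ℤ) : ℂ) ^ n * fourierCoeff f k * fourier k x

/-- `∂₁ⁿ`: Fourier multiplier `(ik)ⁿ` (spatial derivative of smooth periodic functions). -/
def Dn (n : ℕ) (f : AddCircle (2 * Real.pi) → ℂ) : AddCircle (2 * Real.pi) → ℂ :=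
  fun x => ∑' k : ℤ, (Complex.I * (k : ℂ)) ^ n * fourierCoeff f k * fourier k x

/-- A smooth (rapidly decaying Fourier coefficients) real-valued zero-mean function on `S¹`,
given by the sum of its Fourier series. -/
def IsNice (f : AddCircle (2 * Real.pi) → ℂ) : Prop :=
  (∀ n : ℕ, Summable fun k : ℤ => ((|k| : ℤ) : ℝ) ^ n * ‖fourierCoeff f k‖) ∧
  (∀ x, (f x).im = 0) ∧ fourierCoeff f 0 = 0 ∧
  (∀ x, f x = ∑' k : ℤ, fourierCoeff f k * fourier k x)

/-!
Write `w = ∂₁²f`, which has zero mean. Cotlar's identity `H(gw) = H(Hg·Hw) + g·Hw + w·Hg`,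
differentiated with `∂₁H = Λ`, gives `Λ(gw) - Λ(Hg·Hw) = ∂₁(g·Hw) + ∂₁(w·Hg)`. By the Leibniz rule
`∂₁g·Hw + g·Λw = ∂₁(g·Hw)`, and by `H²w = -w` the commutator `[H,Hg]Hw` is `H(Hg·Hw) + w·Hg`;
the claim is then a linear combination of these facts.

Both product identities are read off from double Fourier series indexed by `ℤ × ℤ`: Cotlar's
identity is `sgn(a + b)(1 + sgn a sgn b) = sgn a + sgn b` for `b ≠ 0`.
-/

section Modes

variable {T : ℝ} {ι κ : Type*} {n j : ℕ} {φ : ι → ℤ} {ψ : κ → ℤ} {C D : ι → ℂ} {E : κ → ℂ}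
  {m : ℤ → ℂ} {u v : AddCircle T → ℂ}

/-- `u` is the sum of the modes `C i * fourier (φ i)`, absolutely convergent with the weight
`(1 + |φ i|) ^ n`. Several indices may share a frequency, so that a product of two Fourier series
is again such a sum, indexed by pairs. -/
structure HasModes (n : ℕ) (φ : ι → ℤ) (C : ι → ℂ) (u : AddCircle T → ℂ) : Prop where
  summable : Summable fun i => (1 + |(φ i : ℝ)|) ^ n * ‖C i‖
  hasSum : ∀ x, HasSum (fun i => C i * fourier (φ i) x) (u x)

theorem norm_fourier_apply (k : ℤ) (x : AddCircle T) : ‖fourier k x‖ = 1 := by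
  rw [fourier_apply]
  exact Circle.norm_coe _

theorem summable_norm_of_weight (h : Summable fun i => (1 + |(φ i : ℝ)|) ^ n * ‖C i‖) :
    Summable fun i => ‖C i‖ :=
  h.of_nonneg_of_le (fun _ => norm_nonneg _) fun i =>
    le_mul_of_one_le_left (norm_nonneg _) (one_le_pow₀ (by simp))

theorem summable_norm_mul_fourier (h : Summable fun i => (1 + |(φ i : ℝ)|) ^ n * ‖C i‖)
    (x : AddCircle T) : Summable fun i => ‖C i * fourier (φ i) x‖ := by
  simpa only [norm_mul, norm_fourier_apply, mul_one] using summable_norm_of_weight h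

namespace HasModes

theorem of_tsum (hC : Summable fun i => (1 + |(φ i : ℝ)|) ^ n * ‖C i‖)
    (hu : ∀ x, u x = ∑' i, C i * fourier (φ i) x) : HasModes n φ C u where
  summable := hC
  hasSum x := by
    rw [hu x]
    exact (summable_norm_mul_fourier hC x).of_norm.hasSum

theorem eq_of_coeff_eq {n' : ℕ} (hu : HasModes n φ C u) (hv : HasModes n' φ D v)
    (h : ∀ i, C i = D i) : u = v := by
  obtain rfl : C = D := funext h
  exact funext fun x => (hu.hasSum x).unique (hv.hasSum x)

theorem add (hu : HasModes n φ C u) (hv : HasModes n φ D v) :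
    HasModes n φ (fun i => C i + D i) (u + v) where
  summable := by
    refine (hu.summable.add hv.summable).of_nonneg_of_le (fun _ => by positivity) fun i => ?_
    rw [← mul_add]
    gcongr
    exact norm_add_le _ _
  hasSum x := by
    simpa only [add_mul, Pi.add_apply] using (hu.hasSum x).add (hv.hasSum x)

theorem mono {n' : ℕ} (h : HasModes n φ C u) (hn : n' ≤ n) : HasModes n' φ C u where
  summable := h.summable.of_nonneg_of_le (fun _ => by positivity) fun i => by
    gcongr
    simp
  hasSum := h.hasSum

theorem mul (hu : HasModes n φ C u) (hv : HasModes n ψ E v) :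
    HasModes n (fun p : ι × κ => φ p.1 + ψ p.2) (fun p => C p.1 * E p.2) (u * v) where
  summable := by
    have product_summable := hu.summable.mul_of_nonneg hv.summable
      (fun _ => by positivity) (fun _ => by positivity)
    refine product_summable.of_nonneg_of_le (fun _ => by positivity) fun p => ?_
    have weight_le : 1 + |((φ p.1 + ψ p.2 : ℤ) : ℝ)|
        ≤ (1 + |(φ p.1 : ℝ)|) * (1 + |(ψ p.2 : ℝ)|) := by
      push_cast
      nlinarith [abs_add_le (φ p.1 : ℝ) (ψ p.2),
        mul_nonneg (abs_nonneg (φ p.1 : ℝ)) (abs_nonneg (ψ p.2 : ℝ))]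
    calc (1 + |((φ p.1 + ψ p.2 : ℤ) : ℝ)|) ^ n * ‖C p.1 * E p.2‖
        ≤ ((1 + |(φ p.1 : ℝ)|) * (1 + |(ψ p.2 : ℝ)|)) ^ n * ‖C p.1 * E p.2‖ := by gcongr
      _ = (1 + |(φ p.1 : ℝ)|) ^ n * ‖C p.1‖ * ((1 + |(ψ p.2 : ℝ)|) ^ n * ‖E p.2‖) := by
        rw [mul_pow, norm_mul]; ring
  hasSum x := by
    have summable_products := summable_mul_of_summable_norm
      (summable_norm_mul_fourier hu.summable x) (summable_norm_mul_fourier hv.summable x)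
    refine ((hu.hasSum x).mul (hv.hasSum x) summable_products).congr_fun fun p => ?_
    rw [fourier_add]
    exact mul_mul_mul_comm _ _ _ _

end HasModes

variable [Fact (0 < T)]

/-- The Fourier multiplier with symbol `m`, of which `Hop`, `Lamn` and `Dn` are instances. Its
values are junk where the series does not converge. -/
def fourierMultiplier (m : ℤ → ℂ) (u : AddCircle T → ℂ) : AddCircle T → ℂ :=
  fun x => ∑' k : ℤ, m k * fourierCoeff u k * fourier k x

/-- The symbol `m` has order at most `j`. -/
def HasOrder (m : ℤ → ℂ) (j : ℕ) : Prop :=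
  ∃ K : ℝ, ∀ k, ‖m k‖ ≤ K * (1 + |(k : ℝ)|) ^ j

/-- The weighted Wiener algebra: `u` is everywhere the sum of its Fourier series, whose coefficients
are summable with the weight `(1 + |k|) ^ n`. -/
def MemWiener (n : ℕ) (u : AddCircle T → ℂ) : Prop :=
  HasModes n id (fourierCoeff u) u

theorem integral_fourier_neg_mul (C : ℂ) (k l : ℤ) :
    ∫ t : AddCircle T, fourier (-k) t * (C * fourier l t) ∂AddCircle.haarAddCircle
      = if l = k then C else 0 := by
  have coeff := (fourierCoeff.const_mul (fun t : AddCircle T => fourier l t) C k).trans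
    (congrArg (C * ·) (congrFun (fourierCoeff_fourier l) k))
  simpa [fourierCoeff, Pi.single_apply, eq_comm] using coeff

theorem HasModes.fourierCoeff_eq_tsum_fiber [Countable ι] (h : HasModes n φ C u) (k : ℤ) :
    fourierCoeff u k = ∑' i : φ ⁻¹' {k}, C i := by
  have integrable (i : ι) : Integrable (fun t : AddCircle T =>
      fourier (-k) t * (C i * fourier (φ i) t)) AddCircle.haarAddCircle :=
    Continuous.integrable_of_hasCompactSupport (by fun_prop) (.of_compactSpace _)
  have termwise := hasSum_integral_of_summable_integral_norm integrable <| by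
    simpa only [norm_mul, norm_fourier_apply, mul_one, one_mul, integral_const, probReal_univ,
      one_smul] using summable_norm_of_weight h.summable
  simp only [integral_fourier_neg_mul, ((h.hasSum _).mul_left _).tsum_eq] at termwise
  rw [tsum_subtype]
  exact termwise.tsum_eq.symm.trans (tsum_congr fun i => by simp [Set.indicator])

theorem HasModes.memWiener [Countable ι] (h : HasModes n φ C u) : MemWiener n u where
  summable := by
    refine (h.summable.hasSum.tsum_fiberwise φ).summable.of_nonneg_of_le
      (fun _ => by positivity) fun k => ?_
    have weight_eq (i : φ ⁻¹' {k}) : (φ i : ℝ) = k := congrArg Int.cast i.2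
    simp only [id, h.fourierCoeff_eq_tsum_fiber, weight_eq, tsum_mul_left]
    gcongr
    exact norm_tsum_le_tsum_norm ((summable_norm_of_weight h.summable).subtype _)
  hasSum x := by
    refine ((h.hasSum x).tsum_fiberwise φ).congr_fun fun k => ?_
    have freq_eq (i : φ ⁻¹' {k}) : φ i = k := i.2
    simp only [id, h.fourierCoeff_eq_tsum_fiber, freq_eq, tsum_mul_right]

theorem HasModes.multiplier [Countable ι] (hm : HasOrder m j) (h : HasModes (n + j) φ C u) :
    HasModes n φ (fun i => m (φ i) * C i) (fourierMultiplier m u) := by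
  obtain ⟨K, hK⟩ := hm
  have summable : Summable fun i => (1 + |(φ i : ℝ)|) ^ n * ‖m (φ i) * C i‖ := by
    refine (h.summable.mul_left K).of_nonneg_of_le (fun _ => by positivity) fun i => ?_
    calc (1 + |(φ i : ℝ)|) ^ n * ‖m (φ i) * C i‖
        ≤ (1 + |(φ i : ℝ)|) ^ n * (K * (1 + |(φ i : ℝ)|) ^ j * ‖C i‖) := by
          rw [norm_mul]; gcongr; exact hK _
      _ = K * ((1 + |(φ i : ℝ)|) ^ (n + j) * ‖C i‖) := by rw [pow_add]; ring
  have modes := HasModes.of_tsum (T := T) summable fun _ => rfl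
  convert modes using 1
  funext x
  rw [← (modes.memWiener.hasSum x).tsum_eq]
  refine tsum_congr fun k => ?_
  have freq_eq (i : φ ⁻¹' {k}) : φ i = k := i.2
  simp only [id, modes.fourierCoeff_eq_tsum_fiber, h.fourierCoeff_eq_tsum_fiber, freq_eq,
    tsum_mul_left]

theorem HasModes.fourierCoeff_eq_coeff {c : ℤ → ℂ} (h : HasModes n id c u) (k : ℤ) :
    fourierCoeff u k = c k := by
  rw [h.fourierCoeff_eq_tsum_fiber, Set.preimage_id, tsum_singleton]

namespace MemWiener

theorem add (hu : MemWiener n u) (hv : MemWiener n v) : MemWiener n (u + v) :=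
  (HasModes.add hu hv).memWiener

theorem mul (hu : MemWiener n u) (hv : MemWiener n v) : MemWiener n (u * v) :=
  (HasModes.mul hu hv).memWiener

theorem multiplier (hm : HasOrder m j) (hu : MemWiener (n + j) u) :
    MemWiener n (fourierMultiplier m u) :=
  (HasModes.multiplier hm hu).memWiener

end MemWiener

theorem fourierCoeff_fourierMultiplier (hm : HasOrder m j) (hu : MemWiener j u) (k : ℤ) :
    fourierCoeff (fourierMultiplier m u) k = m k * fourierCoeff u k :=
  (HasModes.multiplier (n := 0) hm ((zero_add j).symm ▸ hu)).fourierCoeff_eq_coeff k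

theorem fourierMultiplier_comp (hm : HasOrder m j) (hu : MemWiener j u) (m' : ℤ → ℂ) :
    fourierMultiplier m' (fourierMultiplier m u) = fourierMultiplier (fun k => m' k * m k) u := by
  funext x
  simp only [fourierMultiplier, fourierCoeff_fourierMultiplier hm hu, mul_assoc]

theorem fourierMultiplier_add (hm : HasOrder m j) (hu : MemWiener j u) (hv : MemWiener j v) :
    fourierMultiplier m (u + v) = fourierMultiplier m u + fourierMultiplier m v := by
  replace hu : HasModes (0 + j) id (fourierCoeff u) u := (zero_add j).symm ▸ hu
  replace hv : HasModes (0 + j) id (fourierCoeff v) v := (zero_add j).symm ▸ hv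
  exact ((hu.add hv).multiplier hm).eq_of_coeff_eq ((hu.multiplier hm).add (hv.multiplier hm))
    fun _ => mul_add _ _ _

end Modes

section CircleOperators

variable {n j : ℕ} {u v : AddCircle (2 * Real.pi) → ℂ}

theorem hasOrder_sign : HasOrder (fun k => -I * (k.sign : ℂ)) 0 := by
  refine ⟨1, fun k => ?_⟩
  rcases Int.sign_trichotomy k with h | h | h <;> simp [h]

theorem hasOrder_I_mul_pow (n : ℕ) : HasOrder (fun k => (I * (k : ℂ)) ^ n) n := by
  refine ⟨1, fun k => ?_⟩
  simp only [norm_pow, norm_mul, norm_I, norm_intCast, one_mul]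
  gcongr
  linarith

theorem IsNice.memWiener (hu : IsNice u) (n : ℕ) : MemWiener n u := by
  obtain ⟨decay, -, -, eq_tsum⟩ := hu
  refine HasModes.of_tsum ?_ eq_tsum
  refine (((decay 0).add (decay n)).mul_left (2 ^ (n - 1))).of_nonneg_of_le
    (fun _ => by positivity) fun k => ?_
  calc (1 + |(k : ℝ)|) ^ n * ‖fourierCoeff u k‖
      ≤ 2 ^ (n - 1) * (1 ^ n + |(k : ℝ)| ^ n) * ‖fourierCoeff u k‖ := by
        gcongr
        exact add_pow_le zero_le_one (abs_nonneg _) n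
    _ = _ := by push_cast; ring

theorem MemWiener.hop (hu : MemWiener n u) : MemWiener n (Hop u) :=
  hu.multiplier hasOrder_sign

theorem MemWiener.dn (hu : MemWiener (n + j) u) : MemWiener n (Dn j u) :=
  hu.multiplier (hasOrder_I_mul_pow j)

theorem fourierCoeff_Dn (hu : MemWiener n u) (k : ℤ) :
    fourierCoeff (Dn n u) k = (I * (k : ℂ)) ^ n * fourierCoeff u k :=
  fourierCoeff_fourierMultiplier (hasOrder_I_mul_pow n) hu k

theorem Dn_add (hu : MemWiener n u) (hv : MemWiener n v) : Dn n (u + v) = Dn n u + Dn n v :=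
  fourierMultiplier_add (hasOrder_I_mul_pow n) hu hv

theorem Dn_one_mul (hu : MemWiener 1 u) (hv : MemWiener 1 v) :
    Dn 1 (u * v) = Dn 1 u * v + u * Dn 1 v := by
  have hD := hasOrder_I_mul_pow 1
  have hDu := HasModes.multiplier (n := 0) hD hu
  have hDv := HasModes.multiplier (n := 0) hD hv
  have hDuv := (HasModes.mul hu hv).multiplier (n := 0) hD
  refine hDuv.eq_of_coeff_eq
    ((hDu.mul (hv.mono zero_le_one)).add ((hu.mono zero_le_one).mul hDv)) fun p => ?_
  simp only [id]
  push_cast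
  ring

theorem Dn_one_Hop (hu : MemWiener 0 u) : Dn 1 (Hop u) = Lamn 1 u := by
  refine (fourierMultiplier_comp hasOrder_sign hu _).trans
    (congrArg (fourierMultiplier · u) (funext fun k => ?_))
  have sign_mul : (k.sign : ℂ) * k = (|k| : ℤ) := mod_cast Int.sign_mul_self_eq_abs k
  linear_combination sign_mul - (k.sign : ℂ) * k * I_sq

theorem Hop_Hop (hu : MemWiener 0 u) (hu0 : fourierCoeff u 0 = 0) : Hop (Hop u) = -u := by
  have hHHu := HasModes.multiplier hasOrder_sign (HasModes.multiplier hasOrder_sign hu)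
  funext x
  refine (hHHu.hasSum x).unique ((hu.hasSum x).neg.congr_fun fun k => ?_)
  rcases eq_or_ne k 0 with rfl | hk
  · simp [hu0]
  · have sign_mul_sign : (k.sign : ℂ) * k.sign = 1 := by
      rw [← Int.cast_mul, ← Int.sign_mul, Int.sign_eq_one_of_pos (mul_self_pos.mpr hk),
        Int.cast_one]
    simp only [id]
    linear_combination (fourierCoeff u k * fourier k x) *
      ((k.sign : ℂ) * k.sign * I_sq - sign_mul_sign)

theorem sign_add_mul_one_add_sign_mul_sign (a : ℤ) {b : ℤ} (hb : b ≠ 0) :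
    (a + b).sign * (1 + a.sign * b.sign) = a.sign + b.sign := by
  grind [Int.sign_eq_one_of_pos, Int.sign_eq_neg_one_of_neg, Int.sign_zero]

theorem Hop_mul (hu : MemWiener 0 u) (hv : MemWiener 0 v) (hv0 : fourierCoeff v 0 = 0) :
    Hop (u * v) = Hop (Hop u * Hop v) + (u * Hop v + Hop u * v) := by
  have hHu := HasModes.multiplier (n := 0) hasOrder_sign hu
  have hHv := HasModes.multiplier (n := 0) hasOrder_sign hv
  have hHuv := (HasModes.mul hu hv).multiplier (n := 0) hasOrder_sign
  have hHHuHv := (hHu.mul hHv).multiplier (n := 0) hasOrder_sign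
  refine hHuv.eq_of_coeff_eq (hHHuHv.add ((HasModes.mul hu hHv).add (hHu.mul hv)))
    fun ⟨a, b⟩ => ?_
  simp only [id]
  rcases eq_or_ne b 0 with rfl | hb
  · simp [hv0]
  · have cotlar_symbol : ((a + b).sign : ℂ) * (1 + a.sign * b.sign) = a.sign + b.sign :=
      mod_cast sign_add_mul_one_add_sign_mul_sign a hb
    linear_combination (-I * fourierCoeff u a * fourierCoeff v b) *
      (cotlar_symbol - ((a + b).sign : ℂ) * a.sign * b.sign * I_sq)

theorem Lamn_one_mul (hu : MemWiener 1 u) (hv : MemWiener 1 v) (hv0 : fourierCoeff v 0 = 0) :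
    Lamn 1 (u * v) = Lamn 1 (Hop u * Hop v) + Dn 1 (u * Hop v) + Dn 1 (Hop u * v) := by
  have huv := hu.mul hv
  have hHuHv := hu.hop.mul hv.hop
  rw [← Dn_one_Hop (huv.mono zero_le_one), ← Dn_one_Hop (hHuHv.mono zero_le_one),
    Hop_mul (hu.mono zero_le_one) (hv.mono zero_le_one) hv0,
    Dn_add hHuHv.hop ((hu.mul hv.hop).add (hu.hop.mul hv)),
    Dn_add (hu.mul hv.hop) (hu.hop.mul hv), add_assoc]

theorem alpha2_grouping_general {g w : AddCircle (2 * Real.pi) → ℂ} (hg : MemWiener 1 g)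
    (hw : MemWiener 1 w) (hw0 : fourierCoeff w 0 = 0) :
    -(Dn 1 g * Hop w + Dn 1 (g * Hop w) + Dn 1 (w * Hop g) - 2 * Lamn 1 (g * w) + g * Lamn 1 w)
      = Dn 1 (Hop (Hop g * Hop w) - Hop g * Hop (Hop w)) + Lamn 1 (Hop g * Hop w) := by
  have hHgHw := hg.hop.mul hw.hop
  have leibniz : Dn 1 (g * Hop w) = Dn 1 g * Hop w + g * Lamn 1 w := by
    rw [Dn_one_mul hg hw.hop, Dn_one_Hop (hw.mono zero_le_one)]
  have commutator : Dn 1 (Hop (Hop g * Hop w) - Hop g * Hop (Hop w))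
      = Lamn 1 (Hop g * Hop w) + Dn 1 (Hop g * w) := by
    rw [Hop_Hop (hw.mono zero_le_one) hw0, mul_neg, sub_neg_eq_add,
      Dn_add hHgHw.hop (hg.hop.mul hw), Dn_one_Hop (hHgHw.mono zero_le_one)]
  rw [commutator, mul_comm w]
  linear_combination leibniz + 2 * Lamn_one_mul hg hw hw0

end CircleOperators

/-- Grouping of the `O(α₂)` nonlinear terms:
`−[∂₁g·H∂₁²f + ∂₁(g·H∂₁²f) + ∂₁(∂₁²f·Hg) − 2Λ(g·∂₁²f) + g·Λ∂₁²f]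
  = ∂₁([H,Hg]H∂₁²f) + Λ(Hg·H∂₁²f)` pointwise. -/
theorem alpha2_grouping (f g : AddCircle (2 * Real.pi) → ℂ)
    (hf : IsNice f) (hg : IsNice g) :
    ∀ x, -(Dn 1 g x * Hop (Dn 2 f) x
          + Dn 1 (fun y => g y * Hop (Dn 2 f) y) x
          + Dn 1 (fun y => Dn 2 f y * Hop g y) x
          - 2 * Lamn 1 (fun y => g y * Dn 2 f y) x
          + g x * Lamn 1 (Dn 2 f) x)
      = Dn 1 (fun y => Hop (fun z => Hop g z * Hop (Dn 2 f) z) y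
            - Hop g y * Hop (Hop (Dn 2 f)) y) x
        + Lamn 1 (fun y => Hop g y * Hop (Dn 2 f) y) x := by
  have hw : MemWiener 1 (Dn 2 f) := (hf.memWiener 3).dn
  have hw0 : fourierCoeff (Dn 2 f) 0 = 0 := by simp [fourierCoeff_Dn (hf.memWiener 2)]
  exact congrFun (alpha2_grouping_general (hg.memWiener 1) hw hw0)
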